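/- Let f : ℍ → ℝ (regarded as the real-valued quaternion function q ↦ (f(q) : ℍ)) be three times continuously real-differentiable on an open set U ⊆ ℍ containing q₀. Then, as λ → 0, the remainder λ ↦ f(q₀ + λ) − f(q₀) − 4·Re((∂f/∂q)(q₀)·λ) − 2 Σ_{η ∈ {1,i,j,k}} Re((∂²f/∂q^η∂q)(q₀)·λ^η·λ) is big-O of |λ|³, where λ^η := η λ η⁻¹, Re(p) is the real (scalar) part of p, and (∂²f/∂q^η∂q)(q₀) is the left HR derivative with respect to η, taken at q₀, of the function q ↦ (∂f/∂q)(q). -/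

import Mathlib

open Quaternion Filter Topology Asymptotics

noncomputable section

/-- The imaginary unit `i` of the real quaternions. -/
def qI : ℍ[ℝ] := ⟨0, 1, 0, 0⟩
/-- The imaginary unit `j` of the real quaternions. -/
def qJ : ℍ[ℝ] := ⟨0, 0, 1, 0⟩
/-- The imaginary unit `k` of the real quaternions. -/
def qK : ℍ[ℝ] := ⟨0, 0, 0, 1⟩

/-- Quaternion rotation `p ↦ μ p μ⁻¹`. -/
def qRot (μ p : ℍ[ℝ]) : ℍ[ℝ] := μ * p * μ⁻¹

/-- The left GHR derivative `∂f/∂q^μ` at `q`. -/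
def lD (f : ℍ[ℝ] → ℍ[ℝ]) (μ q : ℍ[ℝ]) : ℍ[ℝ] :=
  (4 : ℍ[ℝ])⁻¹ * (fderiv ℝ f q 1 - fderiv ℝ f q qI * qRot μ qI
    - fderiv ℝ f q qJ * qRot μ qJ - fderiv ℝ f q qK * qRot μ qK)

/-- The left conjugate GHR derivative `∂f/∂q^{μ*}` at `q`. -/
def lDc (f : ℍ[ℝ] → ℍ[ℝ]) (μ q : ℍ[ℝ]) : ℍ[ℝ] :=
  (4 : ℍ[ℝ])⁻¹ * (fderiv ℝ f q 1 + fderiv ℝ f q qI * qRot μ qI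
    + fderiv ℝ f q qJ * qRot μ qJ + fderiv ℝ f q qK * qRot μ qK)

/-- The right GHR derivative `∂ᵣf/∂q^μ` at `q`. -/
def rD (f : ℍ[ℝ] → ℍ[ℝ]) (μ q : ℍ[ℝ]) : ℍ[ℝ] :=
  (4 : ℍ[ℝ])⁻¹ * (fderiv ℝ f q 1 - qRot μ qI * fderiv ℝ f q qI
    - qRot μ qJ * fderiv ℝ f q qJ - qRot μ qK * fderiv ℝ f q qK)

/-- The right conjugate GHR derivative `∂ᵣf/∂q^{μ*}` at `q`. -/
def rDc (f : ℍ[ℝ] → ℍ[ℝ]) (μ q : ℍ[ℝ]) : ℍ[ℝ] :=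
  (4 : ℍ[ℝ])⁻¹ * (fderiv ℝ f q 1 + qRot μ qI * fderiv ℝ f q qI
    + qRot μ qJ * fderiv ℝ f q qJ + qRot μ qK * fderiv ℝ f q qK)

/-!
For a real-linear map `L` on the quaternions, put
`L_η = 4⁻¹ (L 1 - L i · i^η - L j · j^η - L k · k^η)`. Averaging rotations over `η ∈ {1, i, j, k}`
projects onto the real axis, `∑ η, p^η = 4 Re p`, and this gives `L l = ∑ η, L_η · l^η`. Applied to
the derivative of `g = ∂f/∂q`, this is `Dg(l) = ∑ η, ∂g/∂q^η · l^η`.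

For real-valued `f` the quaternion `∂f/∂q` is a quarter of the conjugate gradient, so
`Df(l) = 4 Re (∂f/∂q · l)`. Differentiating once more, `D²f(l, l) = 4 Re (Dg(l) · l)`, and the
expansion of `Dg(l)` identifies the claimed terms with those of the real Taylor polynomial.
-/

section RealTaylor

variable {E F : Type*} [NormedAddCommGroup E] [NormedSpace ℝ E]
  [NormedAddCommGroup F] [NormedSpace ℝ F]

theorem eventually_forall_mem_Icc_add_smul {P : E → Prop} {x : E} (hP : ∀ᶠ y in 𝓝 x, P y) :
    ∀ᶠ l in 𝓝 (0 : E), ∀ t ∈ Set.Icc (0 : ℝ) 1, P (x + t • l) := by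
  obtain ⟨r, hr, hball⟩ := Metric.eventually_nhds_iff.1 hP
  filter_upwards [Metric.ball_mem_nhds (0 : E) hr] with l hl t ht
  refine hball ?_
  calc dist (x + t • l) x = t * ‖l‖ := by
        rw [dist_eq_norm, add_sub_cancel_left, norm_smul, Real.norm_of_nonneg ht.1]
    _ ≤ ‖l‖ := mul_le_of_le_one_left (norm_nonneg l) ht.2
    _ < r := mem_ball_zero_iff.1 hl

theorem norm_integral_iteratedFDeriv_remainder_le {f : E → F} {x l : E} {n : ℕ} {M : ℝ}
    (hM : ∀ t ∈ Set.Icc (0 : ℝ) 1, ‖iteratedFDeriv ℝ (n + 1) f (x + t • l)‖ ≤ M) :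
    ‖∫ t in (0 : ℝ)..1, (1 - t) ^ n • iteratedFDeriv ℝ (n + 1) f (x + t • l) fun _ => l‖ ≤
      M * ‖l‖ ^ (n + 1) := by
  suffices hbound : ∀ t ∈ Set.uIoc (0 : ℝ) 1,
      ‖(1 - t) ^ n • iteratedFDeriv ℝ (n + 1) f (x + t • l) fun _ => l‖ ≤ M * ‖l‖ ^ (n + 1) by
    simpa using intervalIntegral.norm_integral_le_of_norm_le_const hbound
  intro t ht
  rw [Set.uIoc_of_le zero_le_one] at ht
  have hweight : ‖(1 - t) ^ n‖ ≤ 1 := by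
    rw [norm_pow, Real.norm_of_nonneg (sub_nonneg.2 ht.2)]
    exact pow_le_one₀ (sub_nonneg.2 ht.2) (sub_le_self 1 ht.1.le)
  have hderiv : ‖iteratedFDeriv ℝ (n + 1) f (x + t • l) fun _ => l‖ ≤ M * ‖l‖ ^ (n + 1) := by
    simpa using (iteratedFDeriv ℝ (n + 1) f (x + t • l)).le_of_opNorm_le
      (hM t ⟨ht.1.le, ht.2⟩) fun _ => l
  rw [norm_smul]
  exact (mul_le_of_le_one_left (norm_nonneg _) hweight).trans hderiv

theorem isBigO_sub_sum_iteratedFDeriv [CompleteSpace F] {f : E → F} {x : E} {n : ℕ}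
    (hf : ContDiffAt ℝ (n + 1) f x) :
    (fun l => f (x + l) - ∑ k ∈ Finset.range (n + 1),
        (k.factorial : ℝ)⁻¹ • iteratedFDeriv ℝ k f x fun _ => l)
      =O[𝓝 0] fun l => ‖l‖ ^ (n + 1) := by
  have hcont : ContinuousAt (iteratedFDeriv ℝ (n + 1) f) x :=
    (hf.iteratedFDeriv_right (i := n + 1) (m := 0) (by simp)).continuousAt
  obtain ⟨M, hM⟩ : ∃ M, ∀ᶠ y in 𝓝 x, ‖iteratedFDeriv ℝ (n + 1) f y‖ ≤ M :=
    hcont.norm.isBoundedUnder_le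
  have hsmooth : ∀ᶠ y in 𝓝 x, ContDiffAt ℝ (n + 1) f y := hf.eventually (by simp)
  refine IsBigO.of_bound ((n.factorial : ℝ)⁻¹ * M) ?_
  filter_upwards [eventually_forall_mem_Icc_add_smul hM,
    eventually_forall_mem_Icc_add_smul hsmooth] with l hMl hsmoothl
  rw [map_add_eq_sum_add_integral_iteratedFDeriv hsmoothl, add_sub_cancel_left, norm_smul,
    norm_inv, RCLike.norm_natCast, norm_pow, norm_norm, mul_assoc]
  gcongr
  exact norm_integral_iteratedFDeriv_remainder_le hMl

theorem isBigO_sub_fderiv_sub_fderiv_fderiv [CompleteSpace F] {f : E → F} {x : E}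
    (hf : ContDiffAt ℝ 3 f x) :
    (fun l => f (x + l) - f x - fderiv ℝ f x l - (2 : ℝ)⁻¹ • fderiv ℝ (fderiv ℝ f) x l l)
      =O[𝓝 0] fun l => ‖l‖ ^ 3 := by
  refine (isBigO_sub_sum_iteratedFDeriv (n := 2) (by norm_num; exact hf)).congr_left fun l => ?_
  simp [Finset.sum_range_succ, iteratedFDeriv_two_apply, sub_sub]

end RealTaylor

@[simp] theorem re_qI : qI.re = 0 := rfl
@[simp] theorem imI_qI : qI.imI = 1 := rfl
@[simp] theorem imJ_qI : qI.imJ = 0 := rfl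
@[simp] theorem imK_qI : qI.imK = 0 := rfl
@[simp] theorem re_qJ : qJ.re = 0 := rfl
@[simp] theorem imI_qJ : qJ.imI = 0 := rfl
@[simp] theorem imJ_qJ : qJ.imJ = 1 := rfl
@[simp] theorem imK_qJ : qJ.imK = 0 := rfl
@[simp] theorem re_qK : qK.re = 0 := rfl
@[simp] theorem imI_qK : qK.imI = 0 := rfl
@[simp] theorem imJ_qK : qK.imJ = 0 := rfl
@[simp] theorem imK_qK : qK.imK = 1 := rfl

theorem re_qI_mul (p : ℍ[ℝ]) : (qI * p).re = -p.imI := by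
  simp

theorem re_qJ_mul (p : ℍ[ℝ]) : (qJ * p).re = -p.imJ := by
  simp

theorem re_qK_mul (p : ℍ[ℝ]) : (qK * p).re = -p.imK := by
  simp

theorem ne_zero_of_mem_one_qI_qJ_qK {η : ℍ[ℝ]} (hη : η ∈ [1, qI, qJ, qK]) : η ≠ 0 := by
  rintro rfl
  simp [Quaternion.ext_iff] at hη

theorem qI_inv : qI⁻¹ = -qI :=
  inv_eq_of_mul_eq_one_right (by ext <;> simp)

theorem qJ_inv : qJ⁻¹ = -qJ :=
  inv_eq_of_mul_eq_one_right (by ext <;> simp)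

theorem qK_inv : qK⁻¹ = -qK :=
  inv_eq_of_mul_eq_one_right (by ext <;> simp)

theorem qRot_one_left (p : ℍ[ℝ]) : qRot 1 p = p := by
  simp [qRot]

theorem qRot_mul {η : ℍ[ℝ]} (hη : η ≠ 0) (a b : ℍ[ℝ]) :
    qRot η (a * b) = qRot η a * qRot η b := by
  simp [qRot, mul_assoc, hη]

theorem sum_qRot (p : ℍ[ℝ]) :
    ([1, qI, qJ, qK].map fun η => qRot η p).sum = ((4 * p.re : ℝ) : ℍ[ℝ]) := by
  rw [show 4 * p.re = p.re + (p.re + (p.re + p.re)) by ring]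
  ext <;> simp [qRot, qI_inv, qJ_inv, qK_inv]

theorem map_eq_sum_components {V G : Type*} [AddCommGroup V] [Module ℝ V] [FunLike G ℍ[ℝ] V]
    [LinearMapClass G ℝ ℍ[ℝ] V] (L : G) (l : ℍ[ℝ]) :
    L l = l.re • L 1 + l.imI • L qI + l.imJ • L qJ + l.imK • L qK := by
  have decomposition : l = l.re • (1 : ℍ[ℝ]) + l.imI • qI + l.imJ • qJ + l.imK • qK := by
    ext <;> simp
  simp only [← map_smul, ← map_add, ← decomposition]

theorem four_inv_mul_eq_smul (x : ℍ[ℝ]) : 4⁻¹ * x = (4⁻¹ : ℝ) • x := by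
  rw [← Quaternion.coe_mul_eq_smul, Quaternion.coe_inv]
  rfl

theorem lD_mul_qRot (f : ℍ[ℝ] → ℍ[ℝ]) {η : ℍ[ℝ]} (hη : η ≠ 0) (q l : ℍ[ℝ]) :
    lD f η q * qRot η l =
      4⁻¹ * (fderiv ℝ f q 1 * qRot η l - fderiv ℝ f q qI * qRot η (qI * l)
        - fderiv ℝ f q qJ * qRot η (qJ * l) - fderiv ℝ f q qK * qRot η (qK * l)) := by
  simp only [lD, qRot_mul hη, sub_mul, mul_assoc]

theorem fderiv_apply_eq_sum_lD_mul_qRot (f : ℍ[ℝ] → ℍ[ℝ]) (q l : ℍ[ℝ]) :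
    fderiv ℝ f q l = ([1, qI, qJ, qK].map fun η => lD f η q * qRot η l).sum := by
  set L := fderiv ℝ f q
  have average (a p : ℍ[ℝ]) :
      ([1, qI, qJ, qK].map fun η => a * qRot η p).sum = (4 * p.re) • a := by
    rw [List.sum_map_mul_left, sum_qRot, Quaternion.mul_coe_eq_smul]
  symm
  calc ([1, qI, qJ, qK].map fun η => lD f η q * qRot η l).sum
    _ = ([1, qI, qJ, qK].map fun η => 4⁻¹ * (L 1 * qRot η l - L qI * qRot η (qI * l)
          - L qJ * qRot η (qJ * l) - L qK * qRot η (qK * l))).sum := by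
        congr 1
        exact List.map_congr_left fun η hη =>
          lD_mul_qRot f (ne_zero_of_mem_one_qI_qJ_qK hη) q l
    _ = l.re • L 1 - (qI * l).re • L qI - (qJ * l).re • L qJ - (qK * l).re • L qK := by
        rw [List.sum_map_mul_left, four_inv_mul_eq_smul]
        simp only [sub_eq_add_neg, ← neg_mul, List.sum_map_add, average]
        module
    _ = L l := by
        rw [map_eq_sum_components L l, re_qI_mul, re_qJ_mul, re_qK_mul]
        module

theorem differentiableAt_lD {f : ℍ[ℝ] → ℍ[ℝ]} {q : ℍ[ℝ]} (hf : ContDiffAt ℝ 2 f q)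
    (μ : ℍ[ℝ]) : DifferentiableAt ℝ (lD f μ) q := by
  have hf' : DifferentiableAt ℝ (fderiv ℝ f) q :=
    (hf.fderiv_right (m := 1) (by norm_num)).differentiableAt (by norm_num)
  unfold lD
  fun_prop

section RealValued

/-- The real part of a quaternion as a continuous real-linear functional; composing with it turns
derivatives of quaternion-valued functions into derivatives of their real parts. -/
def qReCLM : ℍ[ℝ] →L[ℝ] ℝ :=
  ⟨QuaternionAlgebra.reₗ _ _ _, Quaternion.continuous_re⟩

theorem qReCLM_apply (q : ℍ[ℝ]) : qReCLM q = q.re :=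
  rfl

theorem contDiffAt_coe_iff {E : Type*} [NormedAddCommGroup E] [NormedSpace ℝ E] {n : WithTop ℕ∞}
    {f : E → ℝ} {x : E} :
    ContDiffAt ℝ n (fun p => (f p : ℍ[ℝ])) x ↔ ContDiffAt ℝ n f x :=
  ⟨fun hf => qReCLM.contDiff.contDiffAt.comp x hf,
    fun hf => (algebraMapCLM ℝ ℍ[ℝ]).contDiff.contDiffAt.comp x hf⟩

theorem fderiv_coe_apply {E : Type*} [NormedAddCommGroup E] [NormedSpace ℝ E] {f : E → ℝ}
    {x : E} (hf : DifferentiableAt ℝ f x) (v : E) :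
    fderiv ℝ (fun p => (f p : ℍ[ℝ])) x v = (fderiv ℝ f x v : ℍ[ℝ]) :=
  congrArg (· v) ((algebraMapCLM ℝ ℍ[ℝ]).hasFDerivAt.comp x hf.hasFDerivAt).fderiv

variable {f : ℍ[ℝ] → ℝ} {q : ℍ[ℝ]}

theorem fderiv_eq_four_mul_re_lD_mul (hf : DifferentiableAt ℝ f q) (l : ℍ[ℝ]) :
    fderiv ℝ f q l = 4 * (lD (fun p => (f p : ℍ[ℝ])) 1 q * l).re := by
  rw [map_eq_sum_components (fderiv ℝ f q) l]
  simp only [lD, fderiv_coe_apply hf, qRot_one_left, four_inv_mul_eq_smul,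
    Quaternion.coe_mul_eq_smul, smul_mul_assoc, sub_mul, Quaternion.re_smul,
    Quaternion.re_sub, re_qI_mul, re_qJ_mul, re_qK_mul, smul_eq_mul]
  ring

theorem fderiv_fderiv_eq_four_mul_re_fderiv_lD_mul (hf : ContDiffAt ℝ 2 f q) (v w : ℍ[ℝ]) :
    fderiv ℝ (fderiv ℝ f) q v w =
      4 * (fderiv ℝ (lD (fun p => (f p : ℍ[ℝ])) 1) q v * w).re := by
  set g := lD (fun p => (f p : ℍ[ℝ])) 1
  have hfderiv : DifferentiableAt ℝ (fderiv ℝ f) q :=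
    (hf.fderiv_right (m := 1) (by norm_num)).differentiableAt (by norm_num)
  have hg : DifferentiableAt ℝ g q := differentiableAt_lD (contDiffAt_coe_iff.2 hf) 1
  have gradient_eq : (fun p => fderiv ℝ f p w) =ᶠ[𝓝 q] fun p => 4 * qReCLM (g p * w) := by
    filter_upwards [hf.eventually (by simp)] with p hp
    exact fderiv_eq_four_mul_re_lD_mul (hp.differentiableAt (by norm_num)) w
  have hleft : HasFDerivAt (fun p => fderiv ℝ f p w) ((fderiv ℝ (fderiv ℝ f) q).flip w) q := by
    simpa using hfderiv.hasFDerivAt.clm_apply (hasFDerivAt_const w q)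
  have hright := (qReCLM.hasFDerivAt.comp q (hg.hasFDerivAt.mul_const' w)).const_mul 4
  exact congrArg (· v) (hleft.unique (hright.congr_of_eventuallyEq gradient_eq))

theorem fderiv_fderiv_self_eq_sum_re_lD_lD (hf : ContDiffAt ℝ 2 f q) (l : ℍ[ℝ]) :
    fderiv ℝ (fderiv ℝ f) q l l =
      4 * ([1, qI, qJ, qK].map fun η =>
        (lD (lD (fun p => (f p : ℍ[ℝ])) 1) η q * qRot η l * l).re).sum := by
  rw [fderiv_fderiv_eq_four_mul_re_fderiv_lD_mul hf, fderiv_apply_eq_sum_lD_mul_qRot,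
    ← List.sum_map_mul_right, ← qReCLM_apply, map_list_sum, List.map_map]
  rfl

end RealValued

theorem taylor_theorem_real_valued
    (f : ℍ[ℝ] → ℝ) (U : Set ℍ[ℝ]) (hU : IsOpen U) (q₀ : ℍ[ℝ]) (hq₀ : q₀ ∈ U)
    (hf : ContDiffOn ℝ 3 (fun p => ((f p : ℝ) : ℍ[ℝ])) U) :
    (fun l : ℍ[ℝ] => f (q₀ + l) - f q₀
        - 4 * (lD (fun p => ((f p : ℝ) : ℍ[ℝ])) 1 q₀ * l).re
        - 2 * (([1, qI, qJ, qK].map fun η =>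
            (lD (fun p => lD (fun p' => ((f p' : ℝ) : ℍ[ℝ])) 1 p) η q₀
              * qRot η l * l).re).sum))
      =O[𝓝 0] fun l : ℍ[ℝ] => ‖l‖ ^ 3 := by
  have hf₃ : ContDiffAt ℝ 3 f q₀ := contDiffAt_coe_iff.1 (hf.contDiffAt (hU.mem_nhds hq₀))
  refine (isBigO_sub_fderiv_sub_fderiv_fderiv hf₃).congr_left fun l => ?_
  rw [fderiv_eq_four_mul_re_lD_mul (hf₃.differentiableAt (by norm_num)),
    fderiv_fderiv_self_eq_sum_re_lD_lD (hf₃.of_le (by norm_num)), smul_eq_mul]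
  ring

end
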